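/- Let (F_0, a) be initial data for the completion problem in ℂ^d with k ≥ d, let f : [0,∞) → [0,∞) be strictly convex, and let F = (F_0, G) ∈ C_a(F_0) be a global minimizer of P_f on C_a(F_0), with associated block structure 0 = s_0 < s_1 < … < s_p and constants c_1 > … > c_p > 0 as in the structure theorem (so that λ + μ = (c_1·1_{s_1},…,c_p·1_{s_p−s_{p−1}}, λ_{s_p+1},…,λ_d)). Then s_{p−1} = min{s ∈ {0,1,…,d−1} : s is feasible}. -/

import Mathlib

open Finset
open scoped ComplexOrder

noncomputable def sortAsc {m : ℕ} (x : Fin m → ℝ) : Fin m → ℝ :=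
  x ∘ Tuple.sort x

noncomputable def sortDesc {m : ℕ} (x : Fin m → ℝ) : Fin m → ℝ :=
  fun i => (x ∘ Tuple.sort x) i.rev

noncomputable def pad {k : ℕ} (x : Fin k → ℝ) (m : ℕ) : Fin m → ℝ :=
  fun i => if h : (i : ℕ) < k then x ⟨i, h⟩ else 0

/-- `MajorizedBy x y` means `x ≺ y`. -/
def MajorizedBy {m : ℕ} (x y : Fin m → ℝ) : Prop :=
  (∀ j : Fin m, ∑ i ∈ Finset.Iic j, sortDesc x i ≤ ∑ i ∈ Finset.Iic j, sortDesc y i) ∧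
    ∑ i, x i = ∑ i, y i

/-- Majorization of vectors of possibly different lengths, padding with zeros. -/
def MajorizedByPad {k m : ℕ} (x : Fin k → ℝ) (y : Fin m → ℝ) : Prop :=
  MajorizedBy (pad x (max k m)) (pad y (max k m))

/-- The frame operator `S_F = ∑ f_i f_i^*` of a finite sequence of vectors in `ℂ^d`. -/
noncomputable def frameOp {d n : ℕ} (F : Fin n → Fin d → ℂ) : Matrix (Fin d) (Fin d) ℂ :=
  ∑ l, Matrix.vecMulVec (F l) (star (F l))

/-- The squared norm `‖g‖²` of a vector in `ℂ^d`. -/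
noncomputable def normSqVec {d : ℕ} (g : Fin d → ℂ) : ℝ :=
  ∑ i, Complex.normSq (g i)

open scoped Classical in
/-- Eigenvalues of a (Hermitian) matrix arranged in decreasing order. -/
noncomputable def eigsDesc {d : ℕ} (S : Matrix (Fin d) (Fin d) ℂ) : Fin d → ℝ :=
  if h : S.IsHermitian then sortDesc h.eigenvalues else 0

open scoped Classical in
/-- Eigenvalues of a (Hermitian) matrix arranged in increasing order. -/
noncomputable def eigsAsc {d : ℕ} (S : Matrix (Fin d) (Fin d) ℂ) : Fin d → ℝ :=
  if h : S.IsHermitian then sortAsc h.eigenvalues else 0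

/-- `Γ_d(a)`: non-increasing nonnegative vectors in `ℝ^d` majorizing `a`. -/
def Gamma {k : ℕ} (d : ℕ) (a : Fin k → ℝ) : Set (Fin d → ℝ) :=
  {μ | Antitone μ ∧ (∀ i, 0 ≤ μ i) ∧ MajorizedByPad a μ}

/-- The convex potential `P_f = tr f(S) = ∑ f(λ_i(S))`. -/
noncomputable def potential {d : ℕ} (f : ℝ → ℝ) (S : Matrix (Fin d) (Fin d) ℂ) : ℝ :=
  ∑ i, f (eigsDesc S i)

/-- Final averages `Q_{j,r} = (1/(r-j)) (∑_{i=j+1}^k a_i + ∑_{i=j+1}^r λ_i)` (1-based). -/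
noncomputable def finalAvg {d k : ℕ} (lam : Fin d → ℝ) (a : Fin k → ℝ) (j r : ℕ) : ℝ :=
  ((∑ i : Fin k, if j ≤ (i : ℕ) then a i else 0) +
      (∑ i : Fin d, if j ≤ (i : ℕ) ∧ (i : ℕ) < r then lam i else 0)) / ((r : ℝ) - (j : ℝ))

/-- Initial averages: `initAvg lam a lo hi = P_{lo+1,hi}` (1-based), i.e. the average of
`h_i = λ_i + a_i` over the (0-based) index window `[lo, hi)`. -/
noncomputable def initAvg {d k : ℕ} (lam : Fin d → ℝ) (a : Fin k → ℝ) (lo hi : ℕ) : ℝ :=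
  ((∑ i : Fin d, if lo ≤ (i : ℕ) ∧ (i : ℕ) < hi then lam i else 0) +
      (∑ i : Fin k, if lo ≤ (i : ℕ) ∧ (i : ℕ) < hi then a i else 0)) / ((hi : ℝ) - (lo : ℝ))

/-- 1-based access to a vector indexed by `Fin d`. -/
noncomputable def get1 {d : ℕ} (lam : Fin d → ℝ) (i : ℕ) : ℝ :=
  if h : i - 1 < d then lam ⟨i - 1, h⟩ else 0

/-- The index `s` is feasible for the pair `(λ, a)`: the unique vector
`ν_s = (c·1_{r-s}, λ_{r+1},…,λ_d)` determined by the truncated data satisfies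
`a^s ≺ ν_s - λ^s`. -/
def FeasibleIdx {d k : ℕ} (lam : Fin d → ℝ) (a : Fin k → ℝ) (s : ℕ) : Prop :=
  ∃ r : ℕ, ∃ c : ℝ, s < r ∧ r ≤ d ∧ 0 < c ∧
    (∀ i : Fin d, s ≤ (i : ℕ) → (i : ℕ) < r → lam i ≤ c) ∧
    (∀ hrd : r < d, c ≤ lam ⟨r, hrd⟩) ∧
    ((r : ℝ) - (s : ℝ)) * c =
      (∑ i : Fin d, if s ≤ (i : ℕ) ∧ (i : ℕ) < r then lam i else 0) +
        (∑ i : Fin k, if s ≤ (i : ℕ) then a i else 0) ∧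
    MajorizedByPad (fun i : Fin (k - s) => a ⟨s + (i : ℕ), by have := i.isLt; omega⟩)
      (fun i : Fin (d - s) =>
        if s + (i : ℕ) < r then c - lam ⟨s + (i : ℕ), by have := i.isLt; omega⟩ else 0)

/-! By Lidskii's inequality the eigenvalues of `S₀ + S_G` majorize `λ + μ`, the spectra of `S₀`
and `S_G` being arranged in opposite orders, and by the Schur–Horn theorem every `ν ≥ 0` with
`a ≺ ν` is the spectrum of some `S_G` that commutes with `S₀` and pairs the eigenvalues in this
way. Karamata's inequality therefore turns a global minimizer into a minimizer of
`∑ f (λ_i + ν_i)` over `a ≺ ν`. Strict convexity then forces `a` and `μ` to have the same partial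
sums wherever `λ + μ` drops, since otherwise a little mass of `μ` could be moved across the drop.

At the start of the last block this equality of partial sums is exactly feasibility, because there
`μ` is the water filling `max (c - λ) 0`. Conversely, let `t` lie in an earlier block, with level
`γ` and end `e`. On `[t, e)` a feasible water filling has to carry at least the mass of `μ`, so
its level is at least `γ`; beyond `e`, where `λ + μ` lies below `γ` or `μ` vanishes, it then
carries strictly more mass than `μ`, although the totals agree. -/

open Matrix

/-! ### Majorization through partial sums -/

section Majorization

variable {n : ℕ}

/-- The partial sum `x₁ + ⋯ + x_m` of a vector; it is the full sum once `m` exceeds the length. -/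
noncomputable def prefixSum (x : Fin n → ℝ) (m : ℕ) : ℝ :=
  ∑ i ∈ {i : Fin n | (i : ℕ) < m}, x i

lemma prefixSum_eq_sum_ite (x : Fin n → ℝ) (m : ℕ) :
    prefixSum x m = ∑ i : Fin n, if (i : ℕ) < m then x i else 0 :=
  sum_filter ..

lemma prefixSum_of_le (x : Fin n → ℝ) {m : ℕ} (h : n ≤ m) : prefixSum x m = ∑ i, x i := by
  rw [prefixSum, filter_true_of_mem fun i _ => i.isLt.trans_le h]

lemma prefixSum_zero (x : Fin n → ℝ) : prefixSum x 0 = 0 := by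
  simp [prefixSum]

lemma prefixSum_sub (x y : Fin n → ℝ) (m : ℕ) :
    prefixSum (x - y) m = prefixSum x m - prefixSum y m :=
  sum_sub_distrib ..

lemma prefixSum_add (x y : Fin n → ℝ) (m : ℕ) :
    prefixSum (x + y) m = prefixSum x m + prefixSum y m :=
  sum_add_distrib

lemma prefixSum_const (c : ℝ) {m : ℕ} (h : m ≤ n) : prefixSum (fun _ : Fin n => c) m = m * c := by
  simp [prefixSum, Fin.card_filter_val_lt, h]

lemma prefixSum_single (i : Fin n) (δ : ℝ) (m : ℕ) :
    prefixSum (Pi.single i δ) m = if (i : ℕ) < m then δ else 0 := by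
  simp [prefixSum, Pi.single_apply]

lemma prefixSum_sub_prefixSum (x : Fin n → ℝ) {t e : ℕ} (h : t ≤ e) :
    prefixSum x e - prefixSum x t = ∑ i ∈ {i : Fin n | t ≤ (i : ℕ) ∧ (i : ℕ) < e}, x i := by
  rw [sub_eq_iff_eq_add', prefixSum, prefixSum,
    ← sum_filter_add_sum_filter_not {i : Fin n | (i : ℕ) < e} (fun i => (i : ℕ) < t),
    filter_filter, filter_filter]
  congr! 3 <;> omega

lemma sum_sub_prefixSum (x : Fin n → ℝ) (t : ℕ) :
    ∑ i, x i - prefixSum x t = ∑ i ∈ {i : Fin n | t ≤ (i : ℕ)}, x i := by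
  rw [sub_eq_iff_eq_add', prefixSum,
    ← sum_filter_add_sum_filter_not univ fun i : Fin n => (i : ℕ) < t]
  simp only [not_lt]

/-- The relation `a ≺ x` for non-increasing vectors of nonnegative numbers, possibly of different
lengths. Partial sums are taken in the given order, so no sorting and no padding is involved. -/
structure PrefixMajorized {k : ℕ} (a : Fin k → ℝ) (x : Fin n → ℝ) : Prop where
  prefixSum_le : ∀ m, prefixSum a m ≤ prefixSum x m
  sum_eq : ∑ i, a i = ∑ i, x i

/-- The vector obtained from `x` by moving the amount `δ` from the entry `i` to the entry `j`
(a Robin Hood move when `0 ≤ δ ≤ x i - x j`). -/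
def transfer {ι : Type*} [DecidableEq ι] (x : ι → ℝ) (i j : ι) (δ : ℝ) : ι → ℝ :=
  x - Pi.single i δ + Pi.single j δ

lemma transfer_eq_update {ι : Type*} [DecidableEq ι] (x : ι → ℝ) {i j : ι} (hij : i ≠ j) (δ : ℝ) :
    transfer x i j δ = Function.update (Function.update x i (x i - δ)) j (x j + δ) := by
  ext l
  rcases eq_or_ne l j with rfl | hj
  · simp [transfer, hij.symm]
  · rcases eq_or_ne l i with rfl | hi <;> simp [transfer, *]

lemma sum_update_update {ι α M : Type*} [Fintype ι] [DecidableEq ι] [AddCommGroup M]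
    (φ : α → M) (x : ι → α) {i j : ι} (hij : i ≠ j) (u v : α) :
    ∑ l, φ (Function.update (Function.update x i u) j v l) =
      ∑ l, φ (x l) + (φ u - φ (x i)) + (φ v - φ (x j)) := by
  rw [add_assoc, ← sub_eq_iff_eq_add', ← sum_sub_distrib,
    Fintype.sum_eq_add i j hij fun l hl => by simp [hl.1, hl.2]]
  simp [hij]

lemma prefixSum_transfer (x : Fin n → ℝ) (i j : Fin n) (δ : ℝ) (m : ℕ) :
    prefixSum (transfer x i j δ) m =
      prefixSum x m - (if (i : ℕ) < m then δ else 0) + if (j : ℕ) < m then δ else 0 := by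
  rw [transfer, prefixSum_add, prefixSum_sub, prefixSum_single, prefixSum_single]

lemma sum_transfer (x : Fin n → ℝ) (i j : Fin n) (δ : ℝ) :
    ∑ l, transfer x i j δ l = ∑ l, x l := by
  simp [transfer, sum_add_distrib]

lemma transfer_mem {ι : Type*} [DecidableEq ι] {s : Set ℝ} (hs : s.OrdConnected) {x : ι → ℝ}
    (hx : ∀ l, x l ∈ s) {i j : ι} {δ : ℝ} (hδ : 0 < δ) (hδx : δ ≤ x i - x j) (l : ι) :
    transfer x i j δ l ∈ s := by
  have hij : i ≠ j := by
    rintro rfl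
    linarith
  rw [transfer_eq_update x hij]
  rcases eq_or_ne l j with rfl | hj
  · exact hs.out (hx l) (hx i) (by rw [Function.update_self]; constructor <;> linarith)
  · rcases eq_or_ne l i with rfl | hi
    · exact hs.out (hx j) (hx l)
        (by rw [Function.update_of_ne hj, Function.update_self]; constructor <;> linarith)
    · simpa [hi, hj] using hx l

lemma prefixMajorized_transfer {k : ℕ} {a : Fin k → ℝ} {x : Fin n → ℝ} (h : PrefixMajorized a x)
    {i j : Fin n} {δ : ℝ} (hij : i < j)
    (hδ : ∀ m, (i : ℕ) < m → m ≤ j → δ ≤ prefixSum x m - prefixSum a m) :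
    PrefixMajorized a (transfer x i j δ) where
  prefixSum_le m := by
    have hle := h.prefixSum_le m
    rw [prefixSum_transfer]
    split_ifs with hi hj hj
    · linarith
    · linarith [hδ m hi (not_lt.1 hj)]
    · omega
    · linarith
  sum_eq := h.sum_eq.trans (sum_transfer ..).symm

lemma PrefixMajorized.exists_lt_lt {a x : Fin n → ℝ} (h : PrefixMajorized a x) (hne : x ≠ a) :
    ∃ i j, i < j ∧ a i < x i ∧ x j < a j ∧ ∀ l < j, a l ≤ x l := by
  obtain ⟨j, hj, hjmin⟩ : ∃ j, x j < a j ∧ ∀ l < j, a l ≤ x l := by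
    have hex : ∃ j, x j < a j := by
      by_contra! hall
      exact hne (funext fun l =>
        ((sum_eq_sum_iff_of_le fun i _ => hall i).1 h.sum_eq l (mem_univ l)).symm)
    obtain ⟨j, hj⟩ := exists_minimal_of_wellFoundedLT (fun j => x j < a j) hex
    exact ⟨j, hj.prop, fun l hl => not_lt.1 fun hlt => hj.not_lt hlt hl⟩
  obtain ⟨i, hij, hi⟩ : ∃ i < j, a i < x i := by
    by_contra! hall
    refine (h.prefixSum_le (j + 1)).not_gt (sum_lt_sum (fun l hl => ?_) ⟨j, by simp, hj⟩)
    rcases (Fin.le_def.2 (Nat.lt_succ_iff.1 (mem_filter.1 hl).2)).lt_or_eq with hlj | rfl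
    exacts [hall l hlj, hj.le]
  exact ⟨i, j, hij, hi, hj, hjmin⟩

lemma PrefixMajorized.exists_transfer {a x : Fin n → ℝ} (ha : Antitone a)
    (h : PrefixMajorized a x) (hne : x ≠ a) :
    ∃ i j δ, 0 < δ ∧ δ ≤ x i - x j ∧ PrefixMajorized a (transfer x i j δ) ∧
      #{l | transfer x i j δ l ≠ a l} < #{l | x l ≠ a l} := by
  obtain ⟨i, j, hij, hi, hj, hbefore⟩ := h.exists_lt_lt hne
  have haij : a j ≤ a i := ha hij.le
  set δ := min (x i - a i) (a j - x j) with hδ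
  have hδi : δ ≤ x i - a i := min_le_left ..
  have hδj : δ ≤ a j - x j := min_le_right ..
  refine ⟨i, j, δ, lt_min (by linarith) (by linarith), by linarith,
    prefixMajorized_transfer h hij fun m him hmj => hδi.trans ?_, card_lt_card ?_⟩
  · rw [← prefixSum_sub]
    exact single_le_sum (f := x - a)
      (fun l hl => sub_nonneg.2 (hbefore l (by have := (mem_filter.1 hl).2; omega)))
      (by simpa using him)
  · rw [transfer_eq_update x hij.ne]
    refine (ssubset_iff_of_subset fun l => ?_).2 ?_
    · rcases eq_or_ne l j with rfl | hlj
      · simp [hj.ne]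
      · rcases eq_or_ne l i with rfl | hli <;> simp [hi.ne', *]
    · rcases min_choice (x i - a i) (a j - x j) with hmin | hmin
      -- the entry at which the minimum defining `δ` is attained becomes correct
      · exact ⟨i, by simp [hi.ne'], by simp [hij.ne, hδ, hmin]⟩
      · exact ⟨j, by simp [hj.ne], by simp [hδ, hmin]⟩

theorem PrefixMajorized.transfer_induction {motive : (Fin n → ℝ) → Prop}
    (step : ∀ x i j δ, 0 < δ → δ ≤ x i - x j → motive x → motive (transfer x i j δ))
    {a x : Fin n → ℝ} (ha : Antitone a) (h : PrefixMajorized a x) (hx : motive x) : motive a := by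
  induction hN : #{l | x l ≠ a l} using Nat.strong_induction_on generalizing x with
  | _ N ih =>
    by_cases hne : x = a
    · exact hne ▸ hx
    · obtain ⟨i, j, δ, hδ, hδx, hmaj, hcard⟩ := h.exists_transfer ha hne
      exact ih _ (hN ▸ hcard) hmaj (step x i j δ hδ hδx hx) rfl

lemma convexOn_map_sub_add_map_add_le {s : Set ℝ} {f : ℝ → ℝ} (hf : ConvexOn ℝ s f) {u v δ : ℝ}
    (hu : u ∈ s) (hv : v ∈ s) (hδ : 0 < δ) (hδuv : δ ≤ u - v) :
    f (u - δ) + f (v + δ) ≤ f u + f v := by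
  have huv : 0 < u - v := hδ.trans_le hδuv
  obtain ⟨t, ht₀, ht₁, rfl⟩ : ∃ t, 0 ≤ t ∧ t ≤ 1 ∧ δ = t * (u - v) :=
    ⟨δ / (u - v), by positivity, (div_le_one huv).2 hδuv, by field_simp⟩
  have hleft := hf.2 hu hv (sub_nonneg.2 ht₁) ht₀ (by ring)
  have hright := hf.2 hu hv ht₀ (sub_nonneg.2 ht₁) (by ring)
  simp only [smul_eq_mul] at hleft hright
  rw [show u - t * (u - v) = (1 - t) * u + t * v by ring,
    show v + t * (u - v) = t * u + (1 - t) * v by ring]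
  linarith

lemma strictConvexOn_map_sub_add_map_add_lt {s : Set ℝ} {f : ℝ → ℝ} (hf : StrictConvexOn ℝ s f)
    {u v δ : ℝ} (hu : u ∈ s) (hv : v ∈ s) (hδ : 0 < δ) (hδuv : δ < u - v) :
    f (u - δ) + f (v + δ) < f u + f v := by
  have huv : 0 < u - v := hδ.trans hδuv
  obtain ⟨t, ht₀, ht₁, rfl⟩ : ∃ t, 0 < t ∧ t < 1 ∧ δ = t * (u - v) :=
    ⟨δ / (u - v), by positivity, (div_lt_one huv).2 hδuv, by field_simp⟩
  have hne : u ≠ v := (sub_pos.1 huv).ne'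
  have hleft := hf.2 hu hv hne (sub_pos.2 ht₁) ht₀ (by ring)
  have hright := hf.2 hu hv hne ht₀ (sub_pos.2 ht₁) (by ring)
  simp only [smul_eq_mul] at hleft hright
  rw [show u - t * (u - v) = (1 - t) * u + t * v by ring,
    show v + t * (u - v) = t * u + (1 - t) * v by ring]
  linarith

theorem PrefixMajorized.sum_map_le {s : Set ℝ} {f : ℝ → ℝ} (hf : ConvexOn ℝ s f)
    {a x : Fin n → ℝ} (ha : Antitone a) (hx : ∀ i, x i ∈ s) (h : PrefixMajorized a x) :
    ∑ i, f (a i) ≤ ∑ i, f (x i) := by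
  refine (h.transfer_induction (motive := fun z => (∀ i, z i ∈ s) ∧ ∑ i, f (z i) ≤ ∑ i, f (x i))
    (fun z i j δ hδ hδz ⟨hz, hle⟩ => ⟨transfer_mem hf.1.ordConnected hz hδ hδz, ?_⟩)
    ha ⟨hx, le_rfl⟩).2
  have hij : i ≠ j := by
    rintro rfl
    linarith
  rw [transfer_eq_update z hij, sum_update_update f z hij]
  linarith [hle, convexOn_map_sub_add_map_add_le hf (hz i) (hz j) hδ hδz]

end Majorization

/-! ### Sorting, padding and truncation -/

section Sorting

variable {n : ℕ}

lemma sortDesc_eq_comp (x : Fin n → ℝ) : sortDesc x = x ∘ Fin.revPerm.trans (Tuple.sort x) := rfl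

lemma antitone_sortDesc (x : Fin n → ℝ) : Antitone (sortDesc x) := fun _ _ hij =>
  Tuple.monotone_sort x (Fin.rev_le_rev.2 hij)

lemma sortDesc_of_antitone {x : Fin n → ℝ} (hx : Antitone x) : sortDesc x = x :=
  Tuple.unique_antitone (σ := Fin.revPerm.trans (Tuple.sort x)) (τ := 1) (antitone_sortDesc x) hx

lemma sum_map_sortDesc (φ : ℝ → ℝ) (x : Fin n → ℝ) : ∑ i, φ (sortDesc x i) = ∑ i, φ (x i) :=
  Equiv.sum_comp (Fin.revPerm.trans (Tuple.sort x)) fun i => φ (x i)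

theorem prefixMajorized_sortDesc_of_sum_le {x y : Fin n → ℝ}
    (h : ∀ I : Finset (Fin n), ∑ i ∈ I, x i ≤ prefixSum y #I) (hsum : ∑ i, x i = ∑ i, y i) :
    PrefixMajorized (sortDesc x) y := by
  have hsum' : ∑ i, sortDesc x i = ∑ i, y i := (sum_map_sortDesc id x).trans hsum
  refine ⟨fun m => ?_, hsum'⟩
  rcases le_total n m with hm | hm
  · rw [prefixSum_of_le _ hm, prefixSum_of_le _ hm, hsum']
  · simpa [prefixSum, sum_map, Fin.card_filter_val_lt, hm, sortDesc_eq_comp] using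
      h (map (Fin.revPerm.trans (Tuple.sort x)).toEmbedding {i : Fin n | (i : ℕ) < m})

lemma sum_Iic_eq_prefixSum (x : Fin n → ℝ) (j : Fin n) :
    ∑ i ∈ Iic j, x i = prefixSum x (j + 1) :=
  sum_congr (Finset.ext fun i => by simp) fun _ _ => rfl

lemma prefixSum_pad (x : Fin n → ℝ) {N : ℕ} (h : n ≤ N) (m : ℕ) :
    prefixSum (pad x N) m = prefixSum x m := by
  rw [prefixSum_eq_sum_ite, prefixSum_eq_sum_ite]
  refine (Fintype.sum_of_injective (Fin.castLE h) (Fin.castLE_injective h) _ _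
    (fun i hi => ?_) fun i => by simp [pad]).symm
  have : ¬ (i : ℕ) < n := fun hin => hi ⟨⟨i, hin⟩, rfl⟩
  simp [pad, this]

lemma sum_pad (x : Fin n → ℝ) {N : ℕ} (h : n ≤ N) : ∑ i, pad x N i = ∑ i, x i := by
  rw [← prefixSum_of_le (pad x N) le_rfl, prefixSum_pad x h, prefixSum_of_le x h]

lemma antitone_pad {x : Fin n → ℝ} (hx : Antitone x) (hx₀ : 0 ≤ x) (N : ℕ) :
    Antitone (pad x N) := by
  intro i j hij
  have hij' : (i : ℕ) ≤ j := hij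
  unfold pad
  split_ifs with hj hi
  · exact hx hij'
  · omega
  · exact hx₀ _
  · rfl

theorem majorizedByPad_iff_prefixMajorized {k : ℕ} {a : Fin k → ℝ} {x : Fin n → ℝ}
    (ha : Antitone a) (ha₀ : 0 ≤ a) (hx : Antitone x) (hx₀ : 0 ≤ x) :
    MajorizedByPad a x ↔ PrefixMajorized a x := by
  have hk := le_max_left k n
  have hn := le_max_right k n
  simp only [MajorizedByPad, MajorizedBy, sortDesc_of_antitone (antitone_pad ha ha₀ _),
    sortDesc_of_antitone (antitone_pad hx hx₀ _), sum_Iic_eq_prefixSum, prefixSum_pad a hk,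
    prefixSum_pad x hn, sum_pad a hk, sum_pad x hn]
  refine ⟨fun ⟨hle, hsum⟩ => ⟨fun m => ?_, hsum⟩, fun h => ⟨fun j => h.prefixSum_le _, h.sum_eq⟩⟩
  rcases Nat.lt_or_ge (max k n) m with hm | hm
  · rw [prefixSum_of_le a (by omega), prefixSum_of_le x (by omega), hsum]
  · cases m with
    | zero => rw [prefixSum_zero, prefixSum_zero]
    | succ j => exact hle ⟨j, hm⟩

/-- The truncation `(x_{t+1}, …, x_n)`. -/
def tail (x : Fin n → ℝ) (t : ℕ) : Fin (n - t) → ℝ :=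
  fun i => x ⟨t + i, by omega⟩

lemma antitone_tail {x : Fin n → ℝ} (hx : Antitone x) (t : ℕ) : Antitone (tail x t) :=
  fun i j hij => hx (by simpa using hij)

lemma prefixSum_tail (x : Fin n → ℝ) (t m : ℕ) :
    prefixSum (tail x t) m = prefixSum x (t + m) - prefixSum x t := by
  rw [prefixSum_sub_prefixSum x (Nat.le_add_right t m), prefixSum_eq_sum_ite, sum_filter]
  refine Fintype.sum_of_injective (fun i : Fin (n - t) => (⟨t + i, by omega⟩ : Fin n))
    (fun i j h => by simpa [Fin.ext_iff] using h) _ _ (fun i hi => if_neg fun h => hi ?_)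
    fun i => by simp [tail]
  exact ⟨⟨i - t, by omega⟩, by ext; simp; omega⟩

lemma sum_tail (x : Fin n → ℝ) (t : ℕ) : ∑ i, tail x t i = ∑ i, x i - prefixSum x t := by
  rw [← prefixSum_of_le (tail x t) le_rfl, prefixSum_tail, prefixSum_of_le x (by omega)]

lemma prefixMajorized_tail_iff {k : ℕ} {a : Fin k → ℝ} {x : Fin n → ℝ} {t : ℕ} :
    PrefixMajorized (tail a t) (tail x t) ↔
      (∀ m, t ≤ m → prefixSum a m - prefixSum a t ≤ prefixSum x m - prefixSum x t) ∧
        ∑ i, a i - prefixSum a t = ∑ i, x i - prefixSum x t := by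
  refine ⟨fun ⟨hle, hsum⟩ => ⟨fun m hm => ?_, by simpa only [sum_tail] using hsum⟩,
    fun ⟨hle, hsum⟩ => ⟨fun m => ?_, by simpa only [sum_tail] using hsum⟩⟩
  · simpa only [prefixSum_tail, Nat.add_sub_cancel' hm] using hle (m - t)
  · simpa only [prefixSum_tail] using hle (t + m) (Nat.le_add_right t m)

end Sorting

/-! ### Feasible indices -/

section Feasibility

variable {d k : ℕ} {lam : Fin d → ℝ}

/-- The amounts that raise the entries of `lam` lying below the level `c` to that level; for
non-decreasing `lam` the vector `ν_s` of the feasibility condition is the truncation of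
`lam + waterFill lam c` for a suitable level. -/
noncomputable def waterFill (lam : Fin d → ℝ) (c : ℝ) : Fin d → ℝ :=
  fun i => max (c - lam i) 0

lemma antitone_waterFill (hlam : Monotone lam) (c : ℝ) : Antitone (waterFill lam c) :=
  fun _ _ hij => max_le_max (sub_le_sub_left (hlam hij) c) le_rfl

lemma waterFill_eq_ite {c : ℝ} {t r : ℕ}
    (hlow : ∀ i : Fin d, t ≤ (i : ℕ) → (i : ℕ) < r → lam i ≤ c)
    (hhigh : ∀ i : Fin d, r ≤ (i : ℕ) → c ≤ lam i) {i : Fin d} (hi : t ≤ (i : ℕ)) :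
    waterFill lam c i = if (i : ℕ) < r then c - lam i else 0 := by
  split_ifs with hir
  · exact max_eq_left (sub_nonneg.2 (hlow i hi hir))
  · exact max_eq_right (sub_nonpos.2 (hhigh i (not_lt.1 hir)))

lemma sum_tail_waterFill {c : ℝ} {t r : ℕ} (htr : t < r) (hrd : r ≤ d)
    (hlow : ∀ i : Fin d, t ≤ (i : ℕ) → (i : ℕ) < r → lam i ≤ c)
    (hhigh : ∀ i : Fin d, r ≤ (i : ℕ) → c ≤ lam i) :
    ∑ i, tail (waterFill lam c) t i =
      ((r : ℝ) - t) * c - (prefixSum lam r - prefixSum lam t) := by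
  have hwindow : ∑ i, tail (waterFill lam c) t i =
      ∑ i ∈ {i : Fin d | t ≤ (i : ℕ) ∧ (i : ℕ) < r}, (c - lam i) := by
    rw [sum_tail, sum_sub_prefixSum, ← filter_filter, sum_filter (fun i : Fin d => (i : ℕ) < r)]
    exact sum_congr rfl fun i hi => waterFill_eq_ite hlow hhigh (mem_filter.1 hi).2
  rw [hwindow, ← prefixSum_sub_prefixSum (fun i => c - lam i) htr.le]
  change prefixSum ((fun _ => c) - lam) r - prefixSum ((fun _ => c) - lam) t = _
  rw [prefixSum_sub, prefixSum_sub, prefixSum_const c hrd, prefixSum_const c (htr.le.trans hrd)]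
  ring

theorem feasibleIdx_iff_waterFill (hlam : Monotone lam) {a : Fin k → ℝ} (ha : Antitone a)
    (ha₀ : 0 ≤ a) {t : ℕ} :
    FeasibleIdx lam a t ↔ ∃ (r : ℕ) (c : ℝ), t < r ∧ r ≤ d ∧ 0 < c ∧
      (∀ i : Fin d, t ≤ (i : ℕ) → (i : ℕ) < r → lam i ≤ c) ∧
      (∀ i : Fin d, r ≤ (i : ℕ) → c ≤ lam i) ∧
      PrefixMajorized (tail a t) (tail (waterFill lam c) t) := by
  refine exists₂_congr fun r c => and_congr_right fun htr => and_congr_right fun hrd =>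
    and_congr_right fun _ => and_congr_right fun hlow => ?_
  have hhigh_iff : (∀ hrd : r < d, c ≤ lam ⟨r, hrd⟩) ↔ ∀ i : Fin d, r ≤ (i : ℕ) → c ≤ lam i :=
    ⟨fun h i hi => (h (hi.trans_lt i.isLt)).trans (hlam hi), fun h _ => h _ le_rfl⟩
  rw [hhigh_iff]
  refine and_congr_right fun hhigh => ?_
  have htail : (fun i : Fin (d - t) => if t + (i : ℕ) < r then c - lam ⟨t + i, by omega⟩ else 0) =
      tail (waterFill lam c) t :=
    funext fun i => (waterFill_eq_ite (i := ⟨t + i, by omega⟩) hlow hhigh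
      (Nat.le_add_right t i)).symm
  rw [htail, ← sum_filter, ← prefixSum_sub_prefixSum lam htr.le, ← sum_filter,
    ← sum_sub_prefixSum, ← sum_tail]
  change _ ∧ MajorizedByPad (tail a t) _ ↔ _
  rw [majorizedByPad_iff_prefixMajorized (antitone_tail ha t) (fun i => ha₀ _)
    (antitone_tail (antitone_waterFill hlam c) t) fun i => le_max_right ..]
  refine and_iff_right_of_imp fun h => ?_
  rw [h.sum_eq, sum_tail_waterFill htr hrd hlow hhigh]
  ring

theorem feasibleIdx_of_last_block (hlam : Monotone lam) {a : Fin k → ℝ} (ha : Antitone a)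
    (ha₀ : 0 ≤ a) {μ : Fin d → ℝ} (hμ₀ : 0 ≤ μ) (haμ : PrefixMajorized a μ) {t r : ℕ} (htr : t < r)
    (hrd : r ≤ d) {c : ℝ} (hc : 0 < c)
    (hblock : ∀ i : Fin d, t ≤ (i : ℕ) → (i : ℕ) < r → lam i + μ i = c)
    (hrest : ∀ i : Fin d, r ≤ (i : ℕ) → μ i = 0 ∧ c ≤ lam i)
    (hprefix : prefixSum a t = prefixSum μ t) : FeasibleIdx lam a t := by
  have hlow (i : Fin d) (hti : t ≤ (i : ℕ)) (hir : (i : ℕ) < r) : lam i ≤ c := by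
    linarith [hblock i hti hir, show 0 ≤ μ i from hμ₀ i]
  have hfill : tail (waterFill lam c) t = tail μ t := by
    ext i
    have hti : t ≤ t + (i : ℕ) := Nat.le_add_right t i
    rw [tail, tail, waterFill_eq_ite hlow (fun i hi => (hrest i hi).2) hti]
    split_ifs with hir
    · exact sub_eq_iff_eq_add'.2 (hblock _ hti hir).symm
    · exact (hrest _ (not_lt.1 hir)).1.symm
  refine (feasibleIdx_iff_waterFill hlam ha ha₀).2
    ⟨r, c, htr, hrd, hc, hlow, fun i hi => (hrest i hi).2, ?_⟩
  rw [hfill, prefixMajorized_tail_iff, hprefix, haμ.sum_eq]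
  exact ⟨fun m _ => sub_le_sub_right (haμ.prefixSum_le m) _, rfl⟩

/-- The level `c` of a feasible `t` has to be at least `γ` in order to cover the amount `a` needs
inside the window `[t, e)`, but then it pours more than the available total behind the window. -/
theorem not_feasibleIdx_of_drop (hlam : Monotone lam) {a : Fin k → ℝ} (ha : Antitone a)
    (ha₀ : 0 ≤ a) {μ : Fin d → ℝ} (hμ₀ : 0 ≤ μ) (haμ : PrefixMajorized a μ) {t : ℕ} {e : Fin d}
    (hte : t < e) {γ : ℝ} (hblock : ∀ i : Fin d, t ≤ (i : ℕ) → i < e → lam i + μ i = γ)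
    (hdrop : lam e + μ e < γ) (hrest : ∀ i, e ≤ i → lam i + μ i ≤ γ ∨ μ i = 0)
    (hprefix : prefixSum a e = prefixSum μ e) : ¬ FeasibleIdx lam a t := by
  rw [feasibleIdx_iff_waterFill hlam ha ha₀]
  rintro ⟨r, c, -, -, -, -, -, hmaj⟩
  obtain ⟨hle, hsum⟩ := prefixMajorized_tail_iff.1 hmaj
  have hwindow : ∑ i ∈ {i : Fin d | t ≤ (i : ℕ) ∧ (i : ℕ) < e}, μ i ≤
      ∑ i ∈ {i : Fin d | t ≤ (i : ℕ) ∧ (i : ℕ) < e}, waterFill lam c i := by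
    rw [← prefixSum_sub_prefixSum μ hte.le, ← prefixSum_sub_prefixSum (waterFill lam c) hte.le]
    linarith [hle e hte.le, haμ.prefixSum_le t]
  have hbehind : ∑ i ∈ {i : Fin d | (e : ℕ) ≤ i}, waterFill lam c i ≤
      ∑ i ∈ {i : Fin d | (e : ℕ) ≤ i}, μ i := by
    rw [← sum_sub_prefixSum, ← sum_sub_prefixSum]
    linarith [hle e hte.le, haμ.sum_eq]
  rcases lt_or_ge c γ with hcγ | hγc
  · refine hwindow.not_gt (sum_lt_sum_of_nonempty
      ⟨⟨t, hte.trans e.isLt⟩, mem_filter.2 ⟨mem_univ _, le_rfl, hte⟩⟩ ?_)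
    intro i hi
    obtain ⟨hti, hie⟩ := (mem_filter.1 hi).2
    have hγ := hblock i hti hie
    have hlam_le : lam i ≤ lam e := hlam (le_of_lt hie)
    exact max_lt (by linarith) (by linarith [show 0 ≤ μ e from hμ₀ e])
  · refine hbehind.not_gt (sum_lt_sum (fun i hi => ?_) ⟨e, by simp, ?_⟩)
    · rcases hrest i (mem_filter.1 hi).2 with h | h
      · exact le_max_of_le_left (by linarith)
      · exact le_max_of_le_right h.le
    · exact lt_max_of_lt_left (by linarith)

lemma exists_castSucc_le_lt_succ {p : ℕ} {s : Fin (p + 1) → ℕ} {i : ℕ} (h₀ : s 0 ≤ i)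
    (hlast : i < s (Fin.last p)) : ∃ j : Fin p, s j.castSucc ≤ i ∧ i < s j.succ := by
  by_contra! h
  exact hlast.not_ge (Fin.induction (motive := fun j => s j ≤ i) h₀ h (Fin.last p))

/-- The block structure `λ + μ = (c_1·1_{s_1}, …, c_p·1_{s_p-s_{p-1}}, λ_{s_p+1}, …, λ_d)` of the
structure theorem, with `p + 1` blocks numbered from `0`: the block `j` consists of the positions
`i` with `s j.castSucc ≤ i < s j.succ`. -/
structure BlockStructure (lam μ : Fin d → ℝ) {p : ℕ} (c : Fin (p + 1) → ℝ)
    (s : Fin (p + 2) → ℕ) : Prop where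
  strictAnti : StrictAnti c
  pos : ∀ j, 0 < c j
  start_eq : s 0 = 0
  strictMono : StrictMono s
  last_le : s (Fin.last (p + 1)) ≤ d
  add_eq : ∀ j, ∀ i : Fin d, s j.castSucc ≤ i → i < s j.succ → lam i + μ i = c j
  eq_zero : ∀ i : Fin d, s (Fin.last (p + 1)) ≤ i → μ i = 0

/-- `a` and `μ` have the same partial sums up to every position at which `lam + μ` drops. -/
def TightAtDrops (lam μ : Fin d → ℝ) (a : Fin k → ℝ) : Prop :=
  ∀ i j : Fin d, (i : ℕ) + 1 = j → lam j + μ j < lam i + μ i → prefixSum a j = prefixSum μ j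

namespace BlockStructure

variable {μ : Fin d → ℝ} {a : Fin k → ℝ} {p : ℕ} {c : Fin (p + 1) → ℝ} {s : Fin (p + 2) → ℕ}

lemma lt_succ (h : BlockStructure lam μ c s) (j : Fin (p + 1)) : s j.castSucc < s j.succ :=
  h.strictMono j.castSucc_lt_succ

lemma succ_le (h : BlockStructure lam μ c s) (j : Fin (p + 1)) : s j.succ ≤ d :=
  (h.strictMono.monotone (Fin.le_last _)).trans h.last_le

lemma prefixSum_castSucc (h : BlockStructure lam μ c s) (hdrop : TightAtDrops lam μ a)
    (j : Fin (p + 1)) : prefixSum a (s j.castSucc) = prefixSum μ (s j.castSucc) := by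
  cases j using Fin.cases with
  | zero => rw [Fin.castSucc_zero, h.start_eq, prefixSum_zero, prefixSum_zero]
  | succ j =>
    have hlt : s j.castSucc.castSucc < s j.succ.castSucc := h.lt_succ j.castSucc
    have hlt' := h.lt_succ j.succ
    have hle := h.succ_le j.succ
    refine hdrop ⟨s j.succ.castSucc - 1, by omega⟩ ⟨s j.succ.castSucc, by omega⟩
      (Nat.sub_add_cancel (by omega)) ?_
    rw [h.add_eq j.succ _ le_rfl hlt',
      h.add_eq j.castSucc _ (Nat.le_sub_one_of_lt hlt) (Nat.sub_one_lt_of_lt hlt)]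
    exact h.strictAnti j.castSucc_lt_succ

lemma last_level_le (h : BlockStructure lam μ c s) (hdk : d ≤ k) (hlam : Monotone lam)
    (ha : ∀ i, 0 < a i) (haμ : PrefixMajorized a μ) (hdrop : TightAtDrops lam μ a) {i : Fin d}
    (hi : s (Fin.last (p + 1)) ≤ i) : c (Fin.last p) ≤ lam i := by
  set r := s (Fin.last (p + 1))
  have hlt : s (Fin.last p).castSucc < r := h.lt_succ (Fin.last p)
  have hrd : r < d := hi.trans_lt i.isLt
  refine le_trans (not_lt.1 fun hlt' => ?_) (hlam (show ⟨r, hrd⟩ ≤ i from hi))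
  have hprefix : prefixSum a r = prefixSum μ r := by
    refine hdrop ⟨r - 1, by omega⟩ ⟨r, hrd⟩ (Nat.sub_add_cancel (by omega)) ?_
    rwa [h.eq_zero _ le_rfl, add_zero,
      h.add_eq (Fin.last p) _ (Nat.le_sub_one_of_lt hlt) (Nat.sub_one_lt_of_lt hlt)]
  have hμ : ∑ i, μ i - prefixSum μ r = 0 := by
    rw [sum_sub_prefixSum]
    exact sum_eq_zero fun i hi => h.eq_zero i (mem_filter.1 hi).2
  have ha' : 0 < ∑ i, a i - prefixSum a r := by
    rw [sum_sub_prefixSum]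
    exact sum_pos (fun i _ => ha i) ⟨⟨r, hrd.trans_le hdk⟩, by simp⟩
  linarith [haμ.sum_eq]

lemma add_le_or_eq_zero (h : BlockStructure lam μ c s) {j : Fin (p + 1)} {i : Fin d}
    (hi : s j.castSucc ≤ i) : lam i + μ i ≤ c j ∨ μ i = 0 := by
  rcases lt_or_ge (i : ℕ) (s (Fin.last (p + 1))) with hlast | hlast
  · obtain ⟨l, hl, hl'⟩ := exists_castSucc_le_lt_succ (h.start_eq.trans_le (Nat.zero_le _)) hlast
    have hjl : j ≤ l := Fin.castSucc_lt_succ_iff.1 (h.strictMono.lt_iff_lt.1 (hi.trans_lt hl'))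
    exact .inl ((h.add_eq l i hl hl').trans_le (h.strictAnti.antitone hjl))
  · exact .inr (h.eq_zero i hlast)

theorem isLeast_feasibleIdx (h : BlockStructure lam μ c s) (hdk : d ≤ k) (hlam : Monotone lam)
    (ha : Antitone a) (ha₀ : ∀ i, 0 < a i) (hμ₀ : 0 ≤ μ) (haμ : PrefixMajorized a μ)
    (hdrop : TightAtDrops lam μ a) :
    IsLeast {t : ℕ | t < d ∧ FeasibleIdx lam a t} (s (Fin.last p).castSucc) := by
  have ha₀' : 0 ≤ a := fun i => (ha₀ i).le
  have hlt := h.lt_succ (Fin.last p)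
  refine ⟨⟨hlt.trans_le h.last_le, ?_⟩, fun t ⟨_, ht⟩ => not_lt.1 fun hts => ?_⟩
  · exact feasibleIdx_of_last_block hlam ha ha₀' hμ₀ haμ hlt h.last_le (h.pos _) (h.add_eq _)
      (fun i hi => ⟨h.eq_zero i hi, h.last_level_le hdk hlam ha₀ haμ hdrop hi⟩)
      (h.prefixSum_castSucc hdrop _)
  · obtain ⟨j, hjt, htj⟩ := exists_castSucc_le_lt_succ (s := fun l => s l.castSucc)
      (h.start_eq.trans_le (Nat.zero_le t)) hts
    let e : Fin d := ⟨s j.succ.castSucc, (h.lt_succ j.succ).trans_le (h.succ_le j.succ)⟩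
    refine not_feasibleIdx_of_drop hlam ha ha₀' hμ₀ haμ (e := e) htj
      (fun i hti hie => h.add_eq j.castSucc i (hjt.trans hti) hie) ?_
      (fun i hei => h.add_le_or_eq_zero ((h.lt_succ j.castSucc).le.trans hei))
      (h.prefixSum_castSucc hdrop _) ht
    rw [h.add_eq j.succ e le_rfl (h.lt_succ j.succ)]
    exact h.strictAnti j.castSucc_lt_succ

end BlockStructure

end Feasibility

/-! ### Spectral decompositions and Lidskii's inequality -/

section Spectrum

open Unitary

variable {𝕜 ι : Type*} [RCLike 𝕜] [Fintype ι]

section DecidableEq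

variable [DecidableEq ι]

/-- `α` lists the eigenvalues of the Hermitian matrix `A` with multiplicity, in some order. -/
def HasSpectrum (A : Matrix ι ι 𝕜) (α : ι → ℝ) : Prop :=
  ∃ U : unitaryGroup ι 𝕜, A = conjStarAlgAut 𝕜 _ U (diagonal (RCLike.ofReal ∘ α))

lemma hasSpectrum_eigenvalues {A : Matrix ι ι 𝕜} (hA : A.IsHermitian) :
    HasSpectrum A hA.eigenvalues :=
  ⟨hA.eigenvectorUnitary, hA.spectral_theorem⟩

lemma re_dotProduct_conj_diagonal (U : unitaryGroup ι 𝕜) (α : ι → ℝ) (v : ι → 𝕜) :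
    RCLike.re (star v ⬝ᵥ conjStarAlgAut 𝕜 _ U (diagonal (RCLike.ofReal ∘ α)) *ᵥ v) =
      ∑ j, α j * ‖((star U : Matrix ι ι 𝕜) *ᵥ v) j‖ ^ 2 := by
  have hadj : star v ᵥ* (U : Matrix ι ι 𝕜) = star ((star U : Matrix ι ι 𝕜) *ᵥ v) := by
    rw [star_mulVec, star_eq_conjTranspose, conjTranspose_conjTranspose]
  rw [conjStarAlgAut_apply, ← mulVec_mulVec, ← mulVec_mulVec, dotProduct_mulVec, hadj, dotProduct,
    map_sum]
  refine sum_congr rfl fun j _ => ?_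
  rw [Pi.star_apply, mulVec_diagonal, mul_left_comm, RCLike.star_def, RCLike.conj_mul,
    Function.comp_apply, RCLike.re_ofReal_mul, ← RCLike.ofReal_pow, RCLike.ofReal_re]

lemma sum_norm_sq_star_mulVec (U : unitaryGroup ι 𝕜) (v : ι → 𝕜) :
    ∑ j, ‖((star U : Matrix ι ι 𝕜) *ᵥ v) j‖ ^ 2 = RCLike.re (star v ⬝ᵥ v) := by
  have h := re_dotProduct_conj_diagonal U 1 v
  have hone : diagonal (RCLike.ofReal ∘ (1 : ι → ℝ)) = (1 : Matrix ι ι 𝕜) := by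
    simp [Function.comp_def]
  simpa [hone] using h.symm

namespace HasSpectrum

variable {A B : Matrix ι ι 𝕜} {α β : ι → ℝ}

protected lemma isHermitian (hA : HasSpectrum A α) : A.IsHermitian := by
  obtain ⟨U, rfl⟩ := hA
  exact isHermitian_mul_mul_conjTranspose _
    (isHermitian_diagonal_of_self_adjoint _ (funext fun i => RCLike.conj_ofReal _))

lemma comp_perm (hA : HasSpectrum A α) (σ : Equiv.Perm ι) : HasSpectrum A (α ∘ σ) := by
  obtain ⟨U, rfl⟩ := hA
  have hU : (U : Matrix ι ι 𝕜).submatrix id σ ∈ unitaryGroup ι 𝕜 := by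
    rw [mem_unitaryGroup_iff, star_eq_conjTranspose, conjTranspose_submatrix, submatrix_mul_equiv,
      ← star_eq_conjTranspose, mem_unitaryGroup_iff.1 U.2, submatrix_id_id]
  refine ⟨⟨_, hU⟩, ?_⟩
  rw [conjStarAlgAut_apply, conjStarAlgAut_apply, star_eq_conjTranspose, star_eq_conjTranspose,
    conjTranspose_submatrix, ← Function.comp_assoc, ← submatrix_diagonal_equiv _ σ,
    submatrix_mul_equiv, submatrix_mul_equiv, submatrix_id_id]

lemma trace_re (hA : HasSpectrum A α) : RCLike.re A.trace = ∑ i, α i := by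
  obtain ⟨U, rfl⟩ := hA
  simp [conjStarAlgAut_apply, trace_mul_cycle]

lemma smul_one_sub (hA : HasSpectrum A α) (τ : ℝ) :
    HasSpectrum ((τ : 𝕜) • 1 - A) fun i => τ - α i := by
  obtain ⟨U, rfl⟩ := hA
  have hdiag : diagonal (RCLike.ofReal ∘ fun i => τ - α i) =
      (τ : 𝕜) • (1 : Matrix ι ι 𝕜) - diagonal (RCLike.ofReal ∘ α) := by
    rw [smul_one_eq_diagonal, diagonal_sub]
    simp [Function.comp_def]
  exact ⟨U, by rw [hdiag, map_sub, map_smul, map_one]⟩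

lemma posSemidef_iff (hA : HasSpectrum A α) : A.PosSemidef ↔ 0 ≤ α := by
  obtain ⟨U, rfl⟩ := hA
  rw [conjStarAlgAut_apply, IsUnit.posSemidef_star_right_conjugate_iff isUnit_coe,
    posSemidef_diagonal_iff]
  simp [Pi.le_def]

lemma exists_posPart (hA : HasSpectrum A α) (τ : ℝ) :
    ∃ P : Matrix ι ι 𝕜, HasSpectrum P (fun i => max (α i - τ) 0) ∧
      ((τ : 𝕜) • 1 - A + P).PosSemidef := by
  obtain ⟨U, rfl⟩ := hA
  set excess : ι → ℝ := fun i => max (α i - τ) 0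
  have hgap : HasSpectrum ((τ : 𝕜) • 1 - conjStarAlgAut 𝕜 _ U (diagonal (RCLike.ofReal ∘ α)) +
      conjStarAlgAut 𝕜 _ U (diagonal (RCLike.ofReal ∘ excess))) fun i => τ - α i + excess i := by
    have hdiag : diagonal (RCLike.ofReal ∘ fun i => τ - α i + excess i) =
        (τ : 𝕜) • (1 : Matrix ι ι 𝕜) - diagonal (RCLike.ofReal ∘ α) +
          diagonal (RCLike.ofReal ∘ excess) := by
      rw [smul_one_eq_diagonal, diagonal_sub, diagonal_add]
      simp [Function.comp_def]
    exact ⟨U, by rw [hdiag, map_add, map_sub, map_smul, map_one]⟩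
  refine ⟨_, ⟨U, rfl⟩, hgap.posSemidef_iff.2 fun i => ?_⟩
  have := le_max_left (α i - τ) 0
  change 0 ≤ τ - α i + max (α i - τ) 0
  linarith

end HasSpectrum

end DecidableEq

namespace HasSpectrum

variable [LinearOrder ι] {A B : Matrix ι ι 𝕜} {α β : ι → ℝ}

/-- As in the Courant–Fischer principle, the constraints, together with orthogonality to the
eigenvectors belonging to `α j`, `j > i`, leave a vector on which the form is at least `α i`. -/
theorem le_of_forall_re_dotProduct_le (hA : HasSpectrum A α) (hα : Antitone α) {i : ι} {τ : ℝ}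
    (w : ι → ι → 𝕜)
    (h : ∀ v, (∀ j < i, w j ⬝ᵥ v = 0) →
      RCLike.re (star v ⬝ᵥ A *ᵥ v) ≤ τ * RCLike.re (star v ⬝ᵥ v)) : α i ≤ τ := by
  obtain ⟨U, rfl⟩ := hA
  let M : Matrix ι ι 𝕜 := fun j => if j < i then w j else if j = i then 0 else star U j
  obtain ⟨v, hv₀, hv⟩ := exists_mulVec_eq_zero_iff.2
    (det_eq_zero_of_row_eq_zero (A := M) i fun l => by simp [M])
  have hw (j : ι) (hj : j < i) : w j ⬝ᵥ v = 0 := by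
    simpa [M, mulVec, hj] using congrFun hv j
  have hU (j : ι) (hj : i < j) : ((star U : Matrix ι ι 𝕜) *ᵥ v) j = 0 := by
    simpa [M, mulVec, hj.not_gt, hj.ne'] using congrFun hv j
  have hpos : 0 < RCLike.re (star v ⬝ᵥ v) :=
    (RCLike.pos_iff.1 (dotProduct_star_self_pos_iff.2 hv₀)).1
  refine le_of_mul_le_mul_right (le_trans ?_ (h v hw)) hpos
  rw [re_dotProduct_conj_diagonal, ← sum_norm_sq_star_mulVec U, mul_sum]
  refine sum_le_sum fun j _ => ?_
  rcases lt_or_ge i j with hj | hj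
  · simp [hU j hj]
  · exact mul_le_mul_of_nonneg_right (hα hj) (by positivity)

theorem le_of_posSemidef_sub (hA : HasSpectrum A α) (hB : HasSpectrum B β) (hα : Antitone α)
    (hβ : Antitone β) (h : (B - A).PosSemidef) : α ≤ β := by
  intro i
  obtain ⟨V, rfl⟩ := hB
  refine hA.le_of_forall_re_dotProduct_le hα (star V : Matrix ι ι 𝕜) fun v hv => ?_
  have hdiff := h.re_dotProduct_nonneg v
  rw [sub_mulVec, dotProduct_sub, map_sub, sub_nonneg] at hdiff
  refine hdiff.trans ?_
  rw [re_dotProduct_conj_diagonal, ← sum_norm_sq_star_mulVec V, mul_sum]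
  refine sum_le_sum fun j _ => ?_
  rcases lt_or_ge j i with hj | hj
  · have hj₀ : ((star V : Matrix ι ι 𝕜) *ᵥ v) j = 0 := hv j hj
    simp [hj₀]
  · exact mul_le_mul_of_nonneg_right (hβ hj) (by positivity)

theorem eq_of_antitone (hα' : HasSpectrum A α) (hβ' : HasSpectrum A β) (hα : Antitone α)
    (hβ : Antitone β) : α = β :=
  le_antisymm (hα'.le_of_posSemidef_sub hβ' hα hβ (by simpa using PosSemidef.zero))
    (hβ'.le_of_posSemidef_sub hα' hβ hα (by simpa using PosSemidef.zero))

end HasSpectrum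

section Lidskii

variable {d : ℕ} {A B : Matrix (Fin d) (Fin d) 𝕜} {lam μ σ : Fin d → ℝ}

lemma hasSpectrum_sortDesc (hA : HasSpectrum A σ) : HasSpectrum A (sortDesc σ) := by
  rw [sortDesc_eq_comp]
  exact hA.comp_perm (Fin.revPerm.trans (Tuple.sort σ))

/-- The matrix `D = τ + (A + B - τ)⁺ - A` dominates both `B` and `τ - A`, so its eigenvalues
dominate those of `B` and, with the excess `tr (A + B - τ)⁺` in total, those of `τ - A`. -/
theorem sum_add_le_card_mul_add_sum_max (hA : HasSpectrum A lam) (hB : HasSpectrum B μ)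
    (hAB : HasSpectrum (A + B) σ) (hlam : Monotone lam) (hμ : Antitone μ) (I : Finset (Fin d))
    (τ : ℝ) : ∑ i ∈ I, (lam i + μ i) ≤ #I * τ + ∑ i, max (σ i - τ) 0 := by
  obtain ⟨P, hP, hgap⟩ := hAB.exists_posPart τ
  have hτA := hA.smul_one_sub τ
  have hD := hasSpectrum_sortDesc (hasSpectrum_eigenvalues (hτA.isHermitian.add hP.isHermitian))
  set δ := sortDesc (hτA.isHermitian.add hP.isHermitian).eigenvalues
  have hδ : Antitone δ := antitone_sortDesc _
  have hμδ : μ ≤ δ := hB.le_of_posSemidef_sub hD hμ hδ (by convert hgap using 1; abel)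
  have hlamδ : (fun i => τ - lam i) ≤ δ :=
    hτA.le_of_posSemidef_sub hD (fun _ _ hij => sub_le_sub_left (hlam hij) τ) hδ
      (by simpa using hP.posSemidef_iff.2 fun i => le_max_right ..)
  have htrace : ∑ i, (δ i - (τ - lam i)) = ∑ i, max (σ i - τ) 0 := by
    rw [sum_sub_distrib, ← hD.trace_re, ← hτA.trace_re, ← hP.trace_re, trace_add, map_add]
    ring
  calc ∑ i ∈ I, (lam i + μ i)
    _ ≤ ∑ i ∈ I, (τ + (δ i - (τ - lam i))) := sum_le_sum fun i _ => by linarith [hμδ i]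
    _ = #I * τ + ∑ i ∈ I, (δ i - (τ - lam i)) := by
      rw [sum_add_distrib, sum_const, nsmul_eq_mul]
    _ ≤ #I * τ + ∑ i, (δ i - (τ - lam i)) := by
      gcongr
      · exact fun i _ _ => sub_nonneg.2 (hlamδ i)
      · exact subset_univ I
    _ = #I * τ + ∑ i, max (σ i - τ) 0 := by rw [htrace]

lemma mul_add_sum_max_eq_prefixSum (hσ : Antitone σ) (i : Fin d) :
    i * σ i + ∑ j, max (σ j - σ i) 0 = prefixSum σ i := by
  have hmax (j : Fin d) : max (σ j - σ i) 0 = if (j : ℕ) < i then σ j - σ i else 0 := by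
    split_ifs with hj
    · exact max_eq_left (sub_nonneg.2 (hσ (le_of_lt hj)))
    · exact max_eq_right (sub_nonpos.2 (hσ (not_lt.1 hj)))
  have hsub := prefixSum_sub σ (fun _ => σ i) i
  rw [prefixSum_const _ i.isLt.le, prefixSum_eq_sum_ite] at hsub
  simp only [Pi.sub_apply] at hsub
  simp only [hmax]
  linarith

theorem prefixMajorized_sortDesc_add (hA : HasSpectrum A lam) (hB : HasSpectrum B μ)
    (hAB : HasSpectrum (A + B) σ) (hlam : Monotone lam) (hμ : Antitone μ) (hσ : Antitone σ) :
    PrefixMajorized (sortDesc (lam + μ)) σ := by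
  have hsum : ∑ i, (lam + μ) i = ∑ i, σ i := by
    simp only [Pi.add_apply]
    rw [sum_add_distrib, ← hA.trace_re, ← hB.trace_re, ← hAB.trace_re, trace_add, map_add]
  refine prefixMajorized_sortDesc_of_sum_le (fun I => ?_) hsum
  rcases (card_finset_fin_le I).lt_or_eq with hI | hI
  · exact (sum_add_le_card_mul_add_sum_max hA hB hAB hlam hμ I _).trans_eq
      (mul_add_sum_max_eq_prefixSum hσ ⟨#I, hI⟩)
  · rw [prefixSum_of_le _ hI.ge, ← hsum, (card_eq_iff_eq_univ I).1 (by simpa using hI)]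

end Lidskii

end Spectrum

section Eigenvalues

variable {d : ℕ} {A B : Matrix (Fin d) (Fin d) ℂ}

lemma hasSpectrum_eigsDesc (hA : A.IsHermitian) : HasSpectrum A (eigsDesc A) := by
  rw [eigsDesc, dif_pos hA]
  exact hasSpectrum_sortDesc (hasSpectrum_eigenvalues hA)

lemma hasSpectrum_eigsAsc (hA : A.IsHermitian) : HasSpectrum A (eigsAsc A) := by
  rw [eigsAsc, dif_pos hA]
  exact (hasSpectrum_eigenvalues hA).comp_perm _

lemma antitone_eigsDesc (A : Matrix (Fin d) (Fin d) ℂ) : Antitone (eigsDesc A) := by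
  unfold eigsDesc
  split_ifs
  exacts [antitone_sortDesc _, antitone_const]

lemma monotone_eigsAsc (A : Matrix (Fin d) (Fin d) ℂ) : Monotone (eigsAsc A) := by
  unfold eigsAsc
  split_ifs
  exacts [Tuple.monotone_sort _, monotone_const]

lemma potential_eq_sum {α : Fin d → ℝ} (hA : HasSpectrum A α) (f : ℝ → ℝ) :
    potential f A = ∑ i, f (α i) := by
  rw [potential, (hasSpectrum_eigsDesc hA.isHermitian).eq_of_antitone (hasSpectrum_sortDesc hA)
    (antitone_eigsDesc A) (antitone_sortDesc α), sum_map_sortDesc]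

/-- Among the sums of matrices with given spectra, commuting ones whose eigenvalues are paired in
opposite orders have the least potential. -/
theorem sum_map_add_le_potential {s : Set ℝ} {f : ℝ → ℝ} (hf : ConvexOn ℝ s f)
    {lam μ : Fin d → ℝ} (hA : HasSpectrum A lam) (hB : HasSpectrum B μ) (hlam : Monotone lam)
    (hμ : Antitone μ) (hs : ∀ i, eigsDesc (A + B) i ∈ s) :
    ∑ i, f (lam i + μ i) ≤ potential f (A + B) := by
  have hlidskii := prefixMajorized_sortDesc_add hA hB
    (hasSpectrum_eigsDesc (hA.isHermitian.add hB.isHermitian)) hlam hμ (antitone_eigsDesc _)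
  have hkaramata := hlidskii.sum_map_le hf (antitone_sortDesc _) hs
  rwa [sum_map_sortDesc] at hkaramata

end Eigenvalues

/-! ### Frame operators with prescribed norms -/

section Frames

open Unitary

variable {d k : ℕ}

lemma posSemidef_sum_vecMulVec {ι : Type*} (G : ι → Fin d → ℂ) (I : Finset ι) :
    (∑ l ∈ I, vecMulVec (G l) (star (G l))).PosSemidef :=
  posSemidef_sum I fun l _ => posSemidef_vecMulVec_self_star (G l)

lemma posSemidef_frameOp (G : Fin k → Fin d → ℂ) : (frameOp G).PosSemidef :=
  posSemidef_sum_vecMulVec G univ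

lemma re_trace_vecMulVec (g : Fin d → ℂ) :
    RCLike.re (vecMulVec g (star g)).trace = normSqVec g := by
  simp [trace_vecMulVec, dotProduct, normSqVec, Complex.mul_conj]

lemma re_trace_sum_vecMulVec {ι : Type*} (G : ι → Fin d → ℂ) (I : Finset ι) :
    RCLike.re (∑ l ∈ I, vecMulVec (G l) (star (G l))).trace = ∑ l ∈ I, normSqVec (G l) := by
  rw [trace_sum, map_sum]
  exact sum_congr rfl fun l _ => re_trace_vecMulVec (G l)

/-- The first `m` vectors span a space of dimension at most `m`, so the eigenvalues of their
frame operator beyond the `m`-th vanish and the first `m` add up to its trace. -/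
theorem prefixSum_normSqVec_le (G : Fin k → Fin d → ℂ) (m : ℕ) :
    prefixSum (normSqVec ∘ G) m ≤ prefixSum (eigsDesc (frameOp G)) m := by
  set I : Finset (Fin k) := {l | (l : ℕ) < m}
  set S := ∑ l ∈ I, vecMulVec (G l) (star (G l))
  have hS : S.PosSemidef := posSemidef_sum_vecMulVec G I
  have hspec := hasSpectrum_eigsDesc hS.isHermitian
  have hvanish (i : Fin d) (hi : m ≤ i) : eigsDesc S i ≤ 0 := by
    refine hspec.le_of_forall_re_dotProduct_le (antitone_eigsDesc S)
      (fun j => if h : (j : ℕ) < k then star (G ⟨j, h⟩) else 0) fun v hv => ?_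
    have hSv : S *ᵥ v = 0 := by
      rw [sum_mulVec]
      refine sum_eq_zero fun l hl => ?_
      have hlm : (l : ℕ) < m := (mem_filter.1 hl).2
      have horth := hv ⟨l, by omega⟩ (Fin.lt_def.2 (hlm.trans_le hi))
      rw [dif_pos l.isLt] at horth
      rw [vecMulVec_mulVec, horth]
      simp
    simp [hSv]
  have hle : eigsDesc S ≤ eigsDesc (frameOp G) :=
    hspec.le_of_posSemidef_sub (hasSpectrum_eigsDesc (posSemidef_frameOp G).isHermitian)
      (antitone_eigsDesc _) (antitone_eigsDesc _) <| by
        have hsplit := sum_filter_add_sum_filter_not univ (fun l : Fin k => (l : ℕ) < m)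
          fun l => vecMulVec (G l) (star (G l))
        rw [frameOp, ← hsplit, add_sub_cancel_left]
        exact posSemidef_sum_vecMulVec G _
  calc prefixSum (normSqVec ∘ G) m
    _ = ∑ i, eigsDesc S i := by rw [← hspec.trace_re, re_trace_sum_vecMulVec]; rfl
    _ ≤ prefixSum (eigsDesc S) m := by
      rw [← sub_nonpos, sum_sub_prefixSum]
      exact sum_nonpos fun i hi => hvanish i (mem_filter.1 hi).2
    _ ≤ prefixSum (eigsDesc (frameOp G)) m := sum_le_sum fun i _ => hle i

theorem prefixMajorized_eigsDesc_frameOp (G : Fin k → Fin d → ℂ) :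
    PrefixMajorized (normSqVec ∘ G) (eigsDesc (frameOp G)) where
  prefixSum_le := prefixSum_normSqVec_le G
  sum_eq := (re_trace_sum_vecMulVec G univ).symm.trans
    (hasSpectrum_eigsDesc (posSemidef_frameOp G).isHermitian).trace_re

/-- Rotating the pair `(g, h)` preserves its frame operator, and a quarter turn takes the norm of
the first vector continuously from that of `g` to that of `h`. -/
lemma exists_vecMulVec_add_eq (g h : Fin d → ℂ) {t : ℝ} (ht : normSqVec h ≤ t)
    (ht' : t ≤ normSqVec g) :
    ∃ u v : Fin d → ℂ, vecMulVec u (star u) + vecMulVec v (star v) =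
      vecMulVec g (star g) + vecMulVec h (star h) ∧
        normSqVec u = t ∧ normSqVec v = normSqVec g + normSqVec h - t := by
  have hcont : Continuous fun θ : ℝ => normSqVec (Real.cos θ • g + Real.sin θ • h) := by
    unfold normSqVec
    fun_prop
  obtain ⟨θ, rfl⟩ := mem_range_of_exists_le_of_exists_ge hcont
    ⟨Real.pi / 2, by simpa using ht⟩ ⟨0, by simpa using ht'⟩
  set u := Real.cos θ • g + Real.sin θ • h
  set v := -Real.sin θ • g + Real.cos θ • h
  have hframe : vecMulVec u (star u) + vecMulVec v (star v) =
      vecMulVec g (star g) + vecMulVec h (star h) := by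
    ext p q
    have hθ : (Real.cos θ : ℂ) ^ 2 + (Real.sin θ : ℂ) ^ 2 = 1 := by
      exact_mod_cast Real.cos_sq_add_sin_sq θ
    simp only [u, v, Matrix.add_apply, vecMulVec_apply, Pi.star_apply, Pi.add_apply, Pi.smul_apply,
      Complex.real_smul, star_add, star_mul', Complex.star_def, Complex.conj_ofReal,
      Complex.ofReal_neg, map_neg]
    linear_combination (g p * starRingEnd ℂ (g q) + h p * starRingEnd ℂ (h q)) * hθ
  refine ⟨u, v, hframe, rfl, eq_sub_of_add_eq' ?_⟩
  have htrace := congrArg (fun M => RCLike.re M.trace) hframe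
  simpa only [trace_add, map_add, re_trace_vecMulVec] using htrace

lemma exists_frameOp_eq_of_transfer (G : Fin k → Fin d → ℂ) {i j : Fin k} {δ : ℝ} (hδ : 0 < δ)
    (hδG : δ ≤ normSqVec (G i) - normSqVec (G j)) :
    ∃ G' : Fin k → Fin d → ℂ,
      frameOp G' = frameOp G ∧ normSqVec ∘ G' = transfer (normSqVec ∘ G) i j δ := by
  have hij : i ≠ j := by
    rintro rfl
    linarith
  obtain ⟨u, v, hframe, hu, hv⟩ := exists_vecMulVec_add_eq (G i) (G j)
    (t := normSqVec (G i) - δ) (by linarith) (by linarith)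
  refine ⟨Function.update (Function.update G i u) j v, ?_, ?_⟩
  · rw [frameOp, sum_update_update (fun g => vecMulVec g (star g)) G hij, ← frameOp, add_assoc,
      sub_add_sub_comm, hframe, sub_self, add_zero]
  · rw [transfer_eq_update _ hij, Function.comp_update, Function.comp_update, hu, hv]
    congr 1
    simp only [Function.comp_apply]
    ring

lemma exists_frameOp_eq_conj_diagonal (hdk : d ≤ k) (U : unitaryGroup (Fin d) ℂ) {ν : Fin d → ℝ}
    (hν : 0 ≤ ν) :
    ∃ G : Fin k → Fin d → ℂ, normSqVec ∘ G = pad ν k ∧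
      frameOp G = conjStarAlgAut ℂ _ U (diagonal (RCLike.ofReal ∘ ν)) := by
  let g (i : Fin d) : Fin d → ℂ := fun p => √(ν i) * (U : Matrix (Fin d) (Fin d) ℂ) p i
  have hnorm (i : Fin d) : normSqVec (g i) = ν i := by
    have hcol : ∑ p, Complex.normSq ((U : Matrix (Fin d) (Fin d) ℂ) p i) = 1 := by
      have hUU := congrArg RCLike.re (congrFun₂ (mem_unitaryGroup_iff'.1 U.2) i i)
      simpa [mul_apply, Complex.normSq_apply] using hUU
    simp only [normSqVec, g, Complex.normSq_mul, Complex.normSq_ofReal, Real.mul_self_sqrt (hν i)]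
    rw [← mul_sum, hcol, mul_one]
  have hframe : ∑ i, vecMulVec (g i) (star (g i)) =
      conjStarAlgAut ℂ _ U (diagonal (RCLike.ofReal ∘ ν)) := by
    ext p q
    rw [conjStarAlgAut_apply, mul_apply, Matrix.sum_apply]
    refine sum_congr rfl fun i _ => ?_
    have hsqrt : (√(ν i) : ℂ) * √(ν i) = ν i := by exact_mod_cast Real.mul_self_sqrt (hν i)
    simp only [g, vecMulVec_apply, Pi.star_apply, star_apply, star_mul', RCLike.star_def,
      Complex.conj_ofReal, mul_diagonal, Function.comp_apply, Complex.coe_algebraMap, ← hsqrt]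
    ring
  refine ⟨fun l => if h : (l : ℕ) < d then g ⟨l, h⟩ else 0, ?_, ?_⟩
  · ext l
    by_cases h : (l : ℕ) < d
    · simp [pad, h, hnorm]
    · simp [pad, h, normSqVec]
  · rw [← hframe]
    refine (Fintype.sum_of_injective (Fin.castLE hdk) (Fin.castLE_injective hdk) _ _
      (fun l hl => ?_) fun i => by simp).symm
    have : ¬ (l : ℕ) < d := fun h => hl ⟨⟨l, h⟩, rfl⟩
    simp [this]

/-- The existence half of the Schur–Horn theorem, in a basis of eigenvectors of `A`. -/
theorem exists_hasSpectrum_add_frameOp (hdk : d ≤ k) {A : Matrix (Fin d) (Fin d) ℂ}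
    {lam : Fin d → ℝ} (hA : HasSpectrum A lam) {a : Fin k → ℝ} (ha : Antitone a) {ν : Fin d → ℝ}
    (hν : 0 ≤ ν) (haν : PrefixMajorized a ν) :
    ∃ G : Fin k → Fin d → ℂ, normSqVec ∘ G = a ∧ HasSpectrum (A + frameOp G) (lam + ν) := by
  obtain ⟨U, rfl⟩ := hA
  have hpad : PrefixMajorized a (pad ν k) :=
    ⟨fun m => (haν.prefixSum_le m).trans_eq (prefixSum_pad ν hdk m).symm,
      haν.sum_eq.trans (sum_pad ν hdk).symm⟩
  obtain ⟨G, hG, hframe⟩ := hpad.transfer_induction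
    (motive := fun x => ∃ G : Fin k → Fin d → ℂ, normSqVec ∘ G = x ∧
      frameOp G = conjStarAlgAut ℂ _ U (diagonal (RCLike.ofReal ∘ ν)))
    (by
      rintro _ i j δ hδ hδG ⟨G, rfl, hG⟩
      obtain ⟨G', hframe, hnorm⟩ := exists_frameOp_eq_of_transfer G hδ hδG
      exact ⟨G', hnorm, hframe.trans hG⟩)
    ha (exists_frameOp_eq_conj_diagonal hdk U hν)
  refine ⟨G, hG, U, ?_⟩
  rw [hframe, ← map_add, diagonal_add]
  simp [Function.comp_def]

end Frames

/-! ### Optimal spectra -/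

section Optimality

variable {d k : ℕ} {f : ℝ → ℝ} {a : Fin k → ℝ}

/-- At a drop of `λ + μ` with slack in the majorization, moving a little mass of `μ` across the
drop would decrease the sum of `f`. -/
theorem tightAtDrops_of_forall_sum_map_le (hf : StrictConvexOn ℝ (Set.Ici 0) f)
    {lam μ : Fin d → ℝ} (hlam : Monotone lam) (hlam₀ : 0 ≤ lam) (hμ₀ : 0 ≤ μ)
    (haμ : PrefixMajorized a μ)
    (hmin : ∀ ν, 0 ≤ ν → PrefixMajorized a ν → ∑ i, f (lam i + μ i) ≤ ∑ i, f (lam i + ν i)) :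
    TightAtDrops lam μ a := by
  intro i j hij hdrop
  by_contra hne
  have hslack : 0 < prefixSum μ j - prefixSum a j :=
    sub_pos.2 ((haμ.prefixSum_le j).lt_of_ne hne)
  have hlt : i < j := Fin.lt_def.2 (by omega)
  obtain ⟨δ, hδ, hδslack, hδdrop⟩ : ∃ δ > 0, δ ≤ prefixSum μ j - prefixSum a j ∧
      δ < lam i + μ i - (lam j + μ j) := by
    obtain ⟨δ, hδ, hδ'⟩ := exists_between (lt_min hslack (sub_pos.2 hdrop))
    exact ⟨δ, hδ, (hδ'.trans_le (min_le_left ..)).le, hδ'.trans_le (min_le_right ..)⟩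
  have hδμ : δ ≤ μ i - μ j := by linarith [hlam hlt.le]
  have hle := hmin (transfer μ i j δ) (transfer_mem Set.ordConnected_Ici hμ₀ hδ hδμ)
    (prefixMajorized_transfer haμ hlt fun m him hmj => by
      obtain rfl : m = j := by omega
      exact hδslack)
  have htransfer (l : Fin d) : lam l + transfer μ i j δ l = transfer (lam + μ) i j δ l := by
    simp only [transfer, Pi.add_apply, Pi.sub_apply]
    ring
  simp only [htransfer, transfer_eq_update (lam + μ) hlt.ne] at hle
  rw [sum_update_update f (lam + μ) hlt.ne] at hle
  have hstrict := strictConvexOn_map_sub_add_map_add_lt hf (add_nonneg (hlam₀ i) (hμ₀ i))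
    (add_nonneg (hlam₀ j) (hμ₀ j)) hδ hδdrop
  simp only [Pi.add_apply] at hle
  linarith

/-- Every spectrum `λ + ν` with `a ≺ ν` is attained by a completion. -/
theorem sum_map_add_le_of_isMin (hdk : d ≤ k) (ha : Antitone a) (hf : ConvexOn ℝ (Set.Ici 0) f)
    {S₀ : Matrix (Fin d) (Fin d) ℂ} (hS₀ : S₀.PosSemidef) {G : Fin k → Fin d → ℂ}
    (hmin : ∀ G' : Fin k → Fin d → ℂ, (∀ i, normSqVec (G' i) = a i) →
      potential f (S₀ + frameOp G) ≤ potential f (S₀ + frameOp G'))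
    {ν : Fin d → ℝ} (hν : 0 ≤ ν) (haν : PrefixMajorized a ν) :
    ∑ i, f (eigsAsc S₀ i + eigsDesc (frameOp G) i) ≤ ∑ i, f (eigsAsc S₀ i + ν i) := by
  have hspec := hasSpectrum_eigsAsc hS₀.isHermitian
  have hG := posSemidef_frameOp G
  have hS := hS₀.add hG
  obtain ⟨G', hG', hspec'⟩ := exists_hasSpectrum_add_frameOp hdk hspec ha hν haν
  calc ∑ i, f (eigsAsc S₀ i + eigsDesc (frameOp G) i)
    _ ≤ potential f (S₀ + frameOp G) :=
      sum_map_add_le_potential hf hspec (hasSpectrum_eigsDesc hG.isHermitian) (monotone_eigsAsc _)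
        (antitone_eigsDesc _) ((hasSpectrum_eigsDesc hS.isHermitian).posSemidef_iff.1 hS)
    _ ≤ potential f (S₀ + frameOp G') := hmin G' fun i => congrFun hG' i
    _ = ∑ i, f (eigsAsc S₀ i + ν i) := potential_eq_sum hspec' f

end Optimality

theorem stmt_12_general {d k : ℕ} (hdk : d ≤ k) {S₀ : Matrix (Fin d) (Fin d) ℂ}
    (hS₀ : S₀.PosSemidef) {a : Fin k → ℝ} (ha_pos : ∀ i, 0 < a i) (ha_mono : Antitone a)
    {f : ℝ → ℝ} (hf : StrictConvexOn ℝ (Set.Ici 0) f)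
    {G : Fin k → Fin d → ℂ} (hG : ∀ i, normSqVec (G i) = a i)
    (hmin : ∀ G' : Fin k → Fin d → ℂ, (∀ i, normSqVec (G' i) = a i) →
      potential f (S₀ + frameOp G) ≤ potential f (S₀ + frameOp G'))
    {p : ℕ} {c : Fin (p + 1) → ℝ} {s : Fin (p + 2) → ℕ}
    (hblocks : BlockStructure (eigsAsc S₀) (eigsDesc (frameOp G)) c s) :
    IsLeast {t : ℕ | t < d ∧ FeasibleIdx (eigsAsc S₀) a t} (s (Fin.last p).castSucc) := by
  have hlam := monotone_eigsAsc S₀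
  have hlam₀ := (hasSpectrum_eigsAsc hS₀.isHermitian).posSemidef_iff.1 hS₀
  have hGS := posSemidef_frameOp G
  have hμ₀ := (hasSpectrum_eigsDesc hGS.isHermitian).posSemidef_iff.1 hGS
  have haμ : PrefixMajorized a (eigsDesc (frameOp G)) :=
    (funext hG : normSqVec ∘ G = a) ▸ prefixMajorized_eigsDesc_frameOp G
  have hdrop : TightAtDrops (eigsAsc S₀) (eigsDesc (frameOp G)) a :=
    tightAtDrops_of_forall_sum_map_le hf hlam hlam₀ hμ₀ haμ fun _ hν haν =>
      sum_map_add_le_of_isMin hdk ha_mono hf.convexOn hS₀ hmin hν haν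
  exact hblocks.isLeast_feasibleIdx hdk hlam ha_mono ha_pos hμ₀ haμ hdrop

theorem stmt_12 {d n₀ k : ℕ} (hdk : d ≤ k)
    (F₀ : Fin n₀ → Fin d → ℂ) (a : Fin k → ℝ)
    (ha_pos : ∀ i, 0 < a i) (ha_mono : Antitone a)
    (f : ℝ → ℝ) (hf : StrictConvexOn ℝ (Set.Ici 0) f) (hf0 : ∀ x ∈ Set.Ici (0 : ℝ), 0 ≤ f x)
    (G : Fin k → Fin d → ℂ) (hG : ∀ i, normSqVec (G i) = a i)
    (hmin : ∀ G' : Fin k → Fin d → ℂ, (∀ i, normSqVec (G' i) = a i) →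
      potential f (frameOp F₀ + frameOp G) ≤ potential f (frameOp F₀ + frameOp G'))
    (lam μ : Fin d → ℝ) (hlam : lam = eigsAsc (frameOp F₀)) (hμ : μ = eigsDesc (frameOp G))
    (sF : ℕ) (hsF : sF = (frameOp G).rank)
    (p : ℕ) (hp : 0 < p) (c : Fin p → ℝ) (hcanti : StrictAnti c) (hcpos : ∀ j, 0 < c j)
    (s : Fin (p + 1) → ℕ) (hs0 : s 0 = 0) (hsm : StrictMono s) (hsl : s (Fin.last p) = sF)
    (hblock : ∀ j : Fin p, ∀ i : Fin d,
      s j.castSucc ≤ (i : ℕ) → (i : ℕ) < s j.succ → lam i + μ i = c j)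
    (htail : ∀ i : Fin d, sF ≤ (i : ℕ) → μ i = 0) :
    IsLeast {t : ℕ | t < d ∧ FeasibleIdx lam a t} (s ⟨p - 1, by omega⟩) := by
  obtain ⟨p, rfl⟩ : ∃ p', p = p' + 1 := ⟨p - 1, by omega⟩
  subst hlam hμ hsF
  exact stmt_12_general hdk (posSemidef_frameOp F₀) ha_pos ha_mono hf hG hmin
    ⟨hcanti, hcpos, hs0, hsm, hsl.trans_le (rank_le_width _), hblock,
      fun i hi => htail i (hsl ▸ hi)⟩
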